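/- arXiv:2308.16867 — 3 statements merged into one kernel-verified Lean document; each statement's English description precedes it below -/
import Mathlib

section
/- A topological space X is a uniformizable Alexandroff space if and only if X is an Alexandroff space and for every a ∈ X and every b ∈ V(a) one has V(b) = V(a). -/
open Set

variable {X : Type*}

/-- `V a` : the intersection of all open neighbourhoods of `a`. -/
def V [TopologicalSpace X] (a : X) : Set X :=
  ⋂₀ {U : Set X | IsOpen U ∧ a ∈ U}

/-- A topological space is uniformizable if its topology is induced by some
uniform structure. -/
def Uniformizable (X : Type*) [t : TopologicalSpace X] : Prop :=
  ∃ u : UniformSpace X, u.toTopologicalSpace = t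

/- For an Alexandroff space, both conditions are equivalent to the R₀ axiom. The points of `V a` are
those specializing to `a`, so `V` is constant on each `V a` exactly when specialization is
symmetric. A uniformizable space is completely regular, hence R₀; conversely, the Kolmogorov
quotient of an R₀ Alexandroff space is T₁ and Alexandroff, hence discrete, and the space carries
the topology induced from this quotient. -/

section

variable [TopologicalSpace X] {a b : X}

theorem V_eq_nhdsKer_singleton (a : X) : V a = nhdsKer {a} := by
  simp only [V, nhdsKer_def, singleton_subset_iff]

theorem mem_V_iff_specializes : b ∈ V a ↔ b ⤳ a := by
  rw [V_eq_nhdsKer_singleton, mem_nhdsKer_singleton]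

theorem V_subset_V_iff_specializes : V b ⊆ V a ↔ b ⤳ a := by
  rw [V_eq_nhdsKer_singleton, V_eq_nhdsKer_singleton, specializes_iff_nhdsKer_subset]

theorem V_eq_V_iff_inseparable : V b = V a ↔ Inseparable b a := by
  rw [Subset.antisymm_iff, V_subset_V_iff_specializes, V_subset_V_iff_specializes,
    inseparable_iff_specializes_and]

theorem forall_isOpen_V_iff_alexandrovDiscrete :
    (∀ a : X, IsOpen (V a)) ↔ AlexandrovDiscrete X := by
  simp only [V_eq_nhdsKer_singleton]
  refine ⟨fun hopen => alexandrovDiscrete_iff_nhds.2 fun a => le_antisymm ?_ ?_,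
    fun _ _ => isOpen_nhdsKer⟩
  · exact Filter.le_principal_iff.2 ((hopen a).mem_nhds (subset_nhdsKer rfl))
  · rw [nhdsKer_singleton_eq_ker_nhds]
    exact Filter.giPrincipalKer.gc.l_u_le _

theorem forall_V_eq_iff_r0Space :
    (∀ a : X, ∀ b ∈ V a, V b = V a) ↔ R0Space X := by
  simp only [mem_V_iff_specializes, V_eq_V_iff_inseparable]
  exact ⟨fun h => ⟨⟨fun b a hba => (h a b hba).specializes'⟩⟩,
    fun _ _ _ hba => hba.inseparable⟩

theorem uniformizable_iff_completelyRegularSpace :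
    Uniformizable X ↔ CompletelyRegularSpace X :=
  completelyRegularSpace_iff_exists_uniformSpace.symm

theorem discreteTopology_separationQuotient [AlexandrovDiscrete X] [R0Space X] :
    DiscreteTopology (SeparationQuotient X) := by
  have : T1Space (SeparationQuotient X) := SeparationQuotient.t1Space_iff.2 inferInstance
  have : AlexandrovDiscrete (SeparationQuotient X) := Quotient.instAlexandrovDiscrete
  infer_instance

theorem completelyRegularSpace_iff_r0Space [AlexandrovDiscrete X] :
    CompletelyRegularSpace X ↔ R0Space X := by
  refine ⟨fun _ => inferInstance, fun _ => ?_⟩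
  have : DiscreteTopology (SeparationQuotient X) := discreteTopology_separationQuotient
  exact SeparationQuotient.isInducing_mk.completelyRegularSpace

end

/-- `X` is a uniformizable Alexandroff space iff `X` is an Alexandroff space and
`V b = V a` for every `a ∈ X` and every `b ∈ V a`. -/
theorem stmt6 [TopologicalSpace X] :
    ((∀ a : X, IsOpen (V a)) ∧ Uniformizable X) ↔
      ((∀ a : X, IsOpen (V a)) ∧ ∀ a : X, ∀ b ∈ V a, V b = V a) := by
  rw [forall_isOpen_V_iff_alexandrovDiscrete, forall_V_eq_iff_r0Space,
    uniformizable_iff_completelyRegularSpace]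
  exact and_congr_right fun _ => completelyRegularSpace_iff_r0Space
end

section
/- For a self-map f : X → X of a set X, the functional Alexandroff topology on X corresponding to f is uniformizable if and only if every point of X is a periodic point of f, i.e., Per(f) = X. -/
open Set

variable {X : Type*}

/-- A topology `t` on `X` is uniformizable if it is induced by some uniform
structure. -/
def UniformizableTop {X : Type*} (t : TopologicalSpace X) : Prop :=
  ∃ u : UniformSpace X, u.toTopologicalSpace = t

/-- `Vf f a = ⋃ₙ f⁻ⁿ(a)` : the union of the preimages of `{a}` under all
iterates of `f` (including the 0-th iterate). -/
def Vf (f : X → X) (a : X) : Set X :=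
  ⋃ n : ℕ, (f^[n]) ⁻¹' {a}

/-- The functional Alexandroff topology on `X` corresponding to `f`, generated
by the basis `{Vf f a : a ∈ X}`. -/
def funcAlexTop (f : X → X) : TopologicalSpace X :=
  TopologicalSpace.generateFrom {S : Set X | ∃ a : X, S = Vf f a}

/-!
A uniformizable space is symmetric (R₀). Conversely, an Alexandrov-discrete R₀ space has a discrete
Kolmogorov quotient, so the discrete uniformity of the quotient pulls back to one inducing the
topology. The functional Alexandroff topology is Alexandrov-discrete, with `Vf f a` the smallest
neighbourhood of `a`; hence `x` specializes to `y` exactly when some iterate of `f` sends `x` to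
`y`. This relation is symmetric iff the orbit of each `f x` returns to `x`, that is, iff every point
is periodic.
-/

open Filter Function Topology

theorem uniformizableTop_iff_r0Space [t : TopologicalSpace X] [AlexandrovDiscrete X] :
    UniformizableTop t ↔ R0Space X := by
  constructor
  · rintro ⟨u, rfl⟩
    infer_instance
  · intro hR0
    have : T1Space (SeparationQuotient X) := SeparationQuotient.t1Space_iff.2 hR0
    have : AlexandrovDiscrete (SeparationQuotient X) := Quotient.instAlexandrovDiscrete
    have hdiscrete : DiscreteTopology (SeparationQuotient X) := inferInstance
    have hinduced : t = TopologicalSpace.induced (SeparationQuotient.mk : X → _) ⊥ := by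
      rw [← hdiscrete.eq_bot]
      exact SeparationQuotient.isInducing_mk.eq_induced
    exact ⟨UniformSpace.comap SeparationQuotient.mk ⊥, hinduced.symm⟩

section FunctionalAlexandroff

variable {f : X → X} {a x y : X}

theorem mem_Vf : x ∈ Vf f a ↔ ∃ n : ℕ, f^[n] x = a := by
  simp only [Vf, mem_iUnion, mem_preimage, mem_singleton_iff]

theorem self_mem_Vf (f : X → X) (a : X) : a ∈ Vf f a :=
  mem_Vf.2 ⟨0, rfl⟩

theorem Vf_subset_Vf_of_mem (h : x ∈ Vf f a) : Vf f x ⊆ Vf f a := by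
  obtain ⟨n, rfl⟩ := mem_Vf.1 h
  intro z hz
  obtain ⟨m, rfl⟩ := mem_Vf.1 hz
  exact mem_Vf.2 ⟨n + m, iterate_add_apply f n m z⟩

theorem apply_mem_Vf_self_iff : f x ∈ Vf f x ↔ x ∈ periodicPts f := by
  rw [mem_Vf, mem_periodicPts]
  constructor
  · rintro ⟨n, hn⟩
    exact ⟨n + 1, n.succ_pos, hn⟩
  · rintro ⟨n, hn, hper⟩
    obtain ⟨m, rfl⟩ := Nat.exists_eq_succ_of_ne_zero hn.ne'
    exact ⟨m, hper⟩

theorem mem_Vf_symm (hx : x ∈ periodicPts f) (h : x ∈ Vf f y) : y ∈ Vf f x := by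
  obtain ⟨k, hk, hper⟩ := mem_periodicPts.1 hx
  obtain ⟨n, rfl⟩ := mem_Vf.1 h
  -- `n * k` is a multiple of the period that is at least `n`, so the subtraction does not truncate.
  refine mem_Vf.2 ⟨n * k - n, ?_⟩
  rw [← iterate_add_apply, Nat.sub_add_cancel (Nat.le_mul_of_pos_right n hk)]
  exact hper.const_mul n

theorem forall_mem_Vf_symm_iff :
    (∀ x y, x ∈ Vf f y → y ∈ Vf f x) ↔ ∀ x, x ∈ periodicPts f :=
  ⟨fun hsymm x => apply_mem_Vf_self_iff.1 (hsymm x (f x) (mem_Vf.2 ⟨1, rfl⟩)),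
    fun hper x _ => mem_Vf_symm (hper x)⟩

theorem nhds_funcAlexTop (f : X → X) (a : X) : @nhds X (funcAlexTop f) a = 𝓟 (Vf f a) := by
  rw [funcAlexTop, TopologicalSpace.nhds_generateFrom]
  apply le_antisymm
  · exact iInf₂_le (Vf f a) ⟨self_mem_Vf f a, a, rfl⟩
  · refine le_iInf₂ ?_
    rintro _ ⟨ha, b, rfl⟩
    exact principal_mono.2 (Vf_subset_Vf_of_mem ha)

theorem alexandrovDiscrete_funcAlexTop (f : X → X) : @AlexandrovDiscrete X (funcAlexTop f) := by
  let _ := funcAlexTop f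
  refine alexandrovDiscrete_iff_nhds.2 fun a => ?_
  rw [nhdsKer_singleton_eq_ker_nhds, nhds_funcAlexTop, ker_principal]

theorem specializes_funcAlexTop_iff : @Specializes X (funcAlexTop f) x y ↔ x ∈ Vf f y := by
  let _ := funcAlexTop f
  rw [specializes_iff_pure, nhds_funcAlexTop, pure_le_principal]

theorem r0Space_funcAlexTop_iff :
    @R0Space X (funcAlexTop f) ↔ ∀ x, x ∈ periodicPts f := by
  let _ := funcAlexTop f
  rw [r0Space_iff, ← forall_mem_Vf_symm_iff, symm_def]
  simp only [specializes_funcAlexTop_iff]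

end FunctionalAlexandroff

/-- The functional Alexandroff topology corresponding to `f : X → X` is
uniformizable iff every point of `X` is a periodic point of `f`. -/
theorem stmt13 (f : X → X) :
    UniformizableTop (funcAlexTop f) ↔
      ∀ x : X, ∃ n : ℕ, 0 < n ∧ f^[n] x = x := by
  let _ := funcAlexTop f
  have : AlexandrovDiscrete X := alexandrovDiscrete_funcAlexTop f
  exact uniformizableTop_iff_r0Space.trans r0Space_funcAlexTop_iff
end

section
/- For any nonempty set X, there is a one-to-one correspondence (bijection) between the family of all topologies on X that are both Alexandroff and uniformizable and the family of all partitions of X; the correspondence sends a partition P to the topology induced by the uniform structure F_P = {α ⊆ X × X : ⋃{D × D : D ∈ P} ⊆ α}, whose family of smallest open neighbourhoods is exactly P. -/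
open Set Topology

variable {X : Type*}

/-- `VT t a` : the intersection of all `t`-open neighbourhoods of `a`. -/
def VT (t : TopologicalSpace X) (a : X) : Set X :=
  ⋂₀ {U : Set X | IsOpen[t] U ∧ a ∈ U}

/-- The uniform structure `F_P` generated by the single entourage
`α₀ = ⋃ {D × D : D ∈ P}` associated with a collection `P` of subsets of `X`. -/
def FP (P : Set (Set X)) : Set (Set (X × X)) :=
  {α | (⋃ D ∈ P, D ×ˢ D) ⊆ α}

/-- The topology induced by the uniform structure `F_P`:
`U` is open iff for every `x ∈ U` there is an entourage `α ∈ F_P` with `α[x] ⊆ U`. -/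
def FPtop (P : Set (Set X)) : TopologicalSpace X where
  IsOpen U := ∀ x ∈ U, ∃ α ∈ FP P, {y | (x, y) ∈ α} ⊆ U
  isOpen_univ := fun _ _ => ⟨Set.univ, Set.subset_univ _, fun _ _ => trivial⟩
  isOpen_inter := by
    intro U W hU hW x hx
    obtain ⟨α, hα, hαU⟩ := hU x hx.1
    obtain ⟨β, hβ, hβW⟩ := hW x hx.2
    exact ⟨α ∩ β, Set.subset_inter hα hβ, fun y hy => ⟨hαU hy.1, hβW hy.2⟩⟩
  isOpen_sUnion := by
    intro S hS x hx
    obtain ⟨U, hU, hxU⟩ := hx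
    obtain ⟨α, hα, h⟩ := hS U hU x hxU
    exact ⟨α, hα, fun y hy => ⟨U, hU, h hy⟩⟩

/-!
An Alexandroff topology is determined by its smallest open neighbourhoods `V(a)`, since `U` is open
iff `V(x) ⊆ U` for all `x ∈ U`. A uniformizable topology is R₀, so `V(a)` is the set of points
inseparable from `a`, and these sets form a partition. Conversely, for a partition `P` the family
`F_P` is the uniformity pulled back from the discrete one along `X → X / P`, and in its topology
`V(a)` is the member of `P` containing `a`.
-/

section SmallestNeighbourhoods

theorem mem_VT_self (t : TopologicalSpace X) (a : X) : a ∈ VT t a :=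
  fun _ hU => hU.2

theorem VT_subset_of_isOpen {t : TopologicalSpace X} {U : Set X} {a : X} (hU : IsOpen[t] U)
    (ha : a ∈ U) : VT t a ⊆ U :=
  sInter_subset_of_mem ⟨hU, ha⟩

theorem mem_VT_iff_specializes [t : TopologicalSpace X] {a b : X} : b ∈ VT t a ↔ b ⤳ a := by
  simp [VT, specializes_iff_forall_open]

theorem isOpen_iff_forall_VT_subset {t : TopologicalSpace X} (ht : ∀ a, IsOpen[t] (VT t a))
    {U : Set X} : IsOpen[t] U ↔ ∀ x ∈ U, VT t x ⊆ U :=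
  ⟨fun hU _ hx => VT_subset_of_isOpen hU hx, fun h =>
    isOpen_iff_forall_mem_open.2 fun x hx => ⟨VT t x, h x hx, ht x, mem_VT_self t x⟩⟩

theorem eq_of_VT_eq {s t : TopologicalSpace X} (hs : ∀ a, IsOpen[s] (VT s a))
    (ht : ∀ a, IsOpen[t] (VT t a)) (h : ∀ a, VT s a = VT t a) : s = t :=
  TopologicalSpace.ext_iff.2 fun U => by
    rw [isOpen_iff_forall_VT_subset hs, isOpen_iff_forall_VT_subset ht]
    simp only [h]

theorem VT_eq_setOf_inseparable [t : TopologicalSpace X] [R0Space X] (a : X) :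
    VT t a = {x | Inseparable x a} :=
  Set.ext fun _ => mem_VT_iff_specializes.trans specializes_iff_inseparable

theorem setOf_VT_eq_classes_inseparableSetoid [t : TopologicalSpace X] [R0Space X] :
    {S : Set X | ∃ x, S = VT t x} = (inseparableSetoid X).classes := by
  simp only [VT_eq_setOf_inseparable]
  rfl

theorem isPartition_setOf_VT {t : TopologicalSpace X} [R0Space X] :
    Setoid.IsPartition {S : Set X | ∃ x, S = VT t x} := by
  rw [setOf_VT_eq_classes_inseparableSetoid]
  exact Setoid.isPartition_classes _

theorem UniformizableTop.r0Space {t : TopologicalSpace X} (ht : UniformizableTop t) :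
    R0Space X := by
  obtain ⟨u, rfl⟩ := ht
  infer_instance

end SmallestNeighbourhoods

section PartitionTopology

variable {P : Set (Set X)}

theorem isOpen_FPtop_iff {U : Set X} :
    IsOpen[FPtop P] U ↔ ∀ D ∈ P, ∀ x ∈ D, x ∈ U → D ⊆ U := by
  constructor
  · intro hU D hD x hxD hxU y hyD
    obtain ⟨α, hα, hαU⟩ := hU x hxU
    exact hαU (hα (mem_biUnion hD ⟨hxD, hyD⟩))
  · intro hU x hxU
    refine ⟨⋃ D ∈ P, D ×ˢ D, Subset.rfl, fun y hxy => ?_⟩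
    obtain ⟨D, hD, hxD, hyD⟩ := mem_iUnion₂.1 hxy
    exact hU D hD x hxD hxU hyD

theorem isOpen_VT_FPtop (P : Set (Set X)) (a : X) : IsOpen[FPtop P] (VT (FPtop P) a) :=
  isOpen_FPtop_iff.2 fun D hD x hxD hx _ hyD U hU =>
    isOpen_FPtop_iff.1 hU.1 D hD x hxD (hx U hU) hyD

theorem isOpen_FPtop_of_mem (hP : Setoid.IsPartition P) {D : Set X} (hD : D ∈ P) :
    IsOpen[FPtop P] D :=
  isOpen_FPtop_iff.2 fun _ hE _ hxE hxD => (Setoid.eq_of_mem_eqv_class hP.2 hE hxE hD hxD).subset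

theorem VT_FPtop_eq_of_mem (hP : Setoid.IsPartition P) {D : Set X} (hD : D ∈ P) {x : X}
    (hx : x ∈ D) : VT (FPtop P) x = D :=
  Subset.antisymm (VT_subset_of_isOpen (isOpen_FPtop_of_mem hP hD) hx)
    (subset_sInter fun _ hU => isOpen_FPtop_iff.1 hU.1 D hD x hx hU.2)

theorem setOf_VT_FPtop (hP : Setoid.IsPartition P) :
    {S : Set X | ∃ x, S = VT (FPtop P) x} = P := by
  ext S
  constructor
  · rintro ⟨x, rfl⟩
    obtain ⟨D, ⟨hD, hx⟩, -⟩ := hP.2 x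
    rwa [VT_FPtop_eq_of_mem hP hD hx]
  · intro hS
    obtain ⟨x, hx⟩ := Setoid.nonempty_of_mem_partition hP hS
    exact ⟨x, (VT_FPtop_eq_of_mem hP hS hx).symm⟩

theorem FPtop_setOf_VT {t : TopologicalSpace X} [R0Space X] (ht : ∀ a, IsOpen[t] (VT t a)) :
    FPtop {S : Set X | ∃ x, S = VT t x} = t :=
  eq_of_VT_eq (isOpen_VT_FPtop _) ht fun a =>
    VT_FPtop_eq_of_mem isPartition_setOf_VT ⟨a, rfl⟩ (mem_VT_self t a)

end PartitionTopology

section PartitionUniformity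

open scoped Uniformity

variable {P : Set (Set X)}

/-- The uniform structure `F_P` of a partition `P` as a Mathlib `UniformSpace`, encoded as the
pullback of the discrete uniformity on the quotient `X / P`; its entourages are the members of
`FP P` by `mem_uniformity_partitionUniformSpace`. -/
abbrev partitionUniformSpace (hP : Setoid.IsPartition P) : UniformSpace X :=
  UniformSpace.comap (Quotient.mk (Setoid.mkClasses P hP.2)) ⊥

theorem biUnion_prod_self_eq_setOf_mk_eq (hP : Setoid.IsPartition P) :
    ⋃ D ∈ P, D ×ˢ D = {p : X × X |
      Quotient.mk (Setoid.mkClasses P hP.2) p.1 = Quotient.mk (Setoid.mkClasses P hP.2) p.2} := by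
  ext p
  rw [mem_ofPred_eq, Quotient.eq, Setoid.rel_iff_exists_classes, Setoid.classes_mkClasses P hP]
  simp only [mem_iUnion, mem_prod, exists_prop]

theorem mem_uniformity_partitionUniformSpace (hP : Setoid.IsPartition P) {α : Set (X × X)} :
    α ∈ 𝓤[partitionUniformSpace hP] ↔ α ∈ FP P := by
  rw [uniformity_comap, bot_uniformity, Filter.comap_principal, Filter.mem_principal, FP,
    mem_ofPred_eq, biUnion_prod_self_eq_setOf_mk_eq hP]
  rfl

theorem toTopologicalSpace_partitionUniformSpace (hP : Setoid.IsPartition P) :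
    (partitionUniformSpace hP).toTopologicalSpace = FPtop P :=
  TopologicalSpace.ext_iff.2 fun U => by
    rw [@isOpen_iff_ball_subset X (partitionUniformSpace hP)]
    simp only [mem_uniformity_partitionUniformSpace]
    rfl

theorem uniformizableTop_FPtop (hP : Setoid.IsPartition P) : UniformizableTop (FPtop P) :=
  ⟨partitionUniformSpace hP, toTopologicalSpace_partitionUniformSpace hP⟩

end PartitionUniformity

/-- For a nonempty set `X`, there is a bijection between the partitions of `X`
and the topologies on `X` that are both Alexandroff and uniformizable; the
bijection sends a partition `P` to the topology induced by the uniform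
structure `F_P`, and the family of smallest open neighbourhoods of that
topology is exactly `P`. -/
theorem stmt19 (X : Type*) (hX : Nonempty X) :
    ∃ e : {P : Set (Set X) // Setoid.IsPartition P} ≃
        {t : TopologicalSpace X //
          (∀ a : X, IsOpen[t] (VT t a)) ∧ UniformizableTop t},
      ∀ P : {P : Set (Set X) // Setoid.IsPartition P},
        (e P : TopologicalSpace X) = FPtop P.1 ∧
        {S : Set X | ∃ x : X, S = VT (FPtop P.1) x} = P.1 := by
  let e : {P : Set (Set X) // Setoid.IsPartition P} ≃
      {t : TopologicalSpace X // (∀ a : X, IsOpen[t] (VT t a)) ∧ UniformizableTop t} :=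
    { toFun P := ⟨FPtop P.1, isOpen_VT_FPtop P.1, uniformizableTop_FPtop P.2⟩
      invFun t := ⟨{S | ∃ x, S = VT t.1 x}, have := t.2.2.r0Space; isPartition_setOf_VT⟩
      left_inv P := Subtype.ext (setOf_VT_FPtop P.2)
      right_inv t := have := t.2.2.r0Space; Subtype.ext (FPtop_setOf_VT t.2.1) }
  exact ⟨e, fun P => ⟨rfl, setOf_VT_FPtop P.2⟩⟩
end
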